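/- Let n ∈ {2,3,...}, ϱ ≥ 1, α ∈ [1/n, 1), β ∈ (0, 1/(2ϱ)) and m > 0. Let ℓ ∈ (0, π/2) be the unique solution of cos ℓ = ℓ, and set C₁ := α ℓ^{2-2ϱ} / (2ϱ). Then there exists a function ε : (0,∞) → ℝ with ε(t) → 0 as t → ∞ such that for all sufficiently large t, u_{α,ϱ}(t, m t^β) ≥ C₁ m^{2ϱ-1} t^{β(2ϱ-1) − αn} E_α(t^α) (1 − ε(t)). In particular, u_{α,ϱ}(t, m t^β) → ∞ as t → ∞. -/

import Mathlib

open Real MeasureTheory Filter Topology intervalIntegral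

/-- The two-parameter Mittag-Leffler function `E_{α,β}(z) = ∑ z^n / Γ(αn+β)`. -/
noncomputable def ML (a b z : ℝ) : ℝ :=
  ∑' n : ℕ, z ^ n / Real.Gamma (a * n + b)

/-! By log-convexity of `Γ`, the terms `t ^ (αj) / Γ(αj + 1)` are comparable with `t ^ k / k!` for
integers `k` near `αj`, so `E_α(t ^ α)` lies between constant multiples of `e ^ t`.

In the cosine integral defining `u t x`, the frequencies `ξ ≤ t ^ (-1/(2ϱ))` contribute at least a
multiple of `t ^ (-1/(2ϱ)) e ^ t`: there `t ^ α (1 - ξ ^ (2ϱ)) ≥ (t - 1/α) ^ α` by Bernoulli's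
inequality, and `cos (x ξ) ≥ 1/2`.
Fix `γ < 1/(2ϱ)` with `x ≤ t ^ γ`. Up to `ξ = t ^ (-γ)` the integrand is nonnegative; on
`[t ^ (-γ), 1]` it is at most a multiple of `exp (t - t ^ (1 - 2ϱγ))`, which is of smaller order.
For `ξ ≥ 1` the bound `0 ≤ E_α(-z) ≤ (1 + z / Γ(α + 1))⁻¹` makes the tail bounded.

The two inequalities for `E_α(-z)` come from the Volterra equation satisfied by
`t ^ (b - 1) E_{α,b}(-κ t ^ α)`: a solution cannot have a first zero, so it is positive for
`b = 1` and `b = α`, hence `E_α(-κ t ^ α)` is decreasing in `t`, and inserting this monotonicity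
back into the equation gives the upper bound.
-/

section GammaRatio

variable {x t s θ : ℝ} {k : ℕ}

lemma Gamma_add_le_rpow_mul_Gamma (hx : 0 < x) (hθ : 0 ≤ θ) (hθ1 : θ ≤ 1) :
    Gamma (x + θ) ≤ x ^ θ * Gamma x := by
  have hG : 0 < Gamma x := Gamma_pos_of_pos hx
  have hconv := convexOn_log_Gamma.2 (Set.mem_Ioi.2 hx) (Set.mem_Ioi.2 (add_pos hx one_pos))
    (sub_nonneg.2 hθ1) hθ (sub_add_cancel 1 θ)
  simp only [smul_eq_mul, Function.comp_apply, Gamma_add_one hx.ne', log_mul hx.ne' hG.ne'] at hconv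
  rw [← log_le_log_iff (Gamma_pos_of_pos (by linarith)) (by positivity),
    log_mul (by positivity) hG.ne', log_rpow hx]
  calc log (Gamma (x + θ)) = log (Gamma ((1 - θ) * x + θ * (x + 1))) := by ring_nf
    _ ≤ _ := hconv
    _ = θ * log x + log (Gamma x) := by ring

lemma rpow_div_Gamma_le_pow_div_factorial (ht : 0 ≤ t) (hk : k ≤ s) (hs : s < k + 1) :
    t ^ s / Gamma (s + 1) ≤ t ^ (k + 1) / (k + 1).factorial + 2 * (t ^ k / k.factorial) := by
  have hG : 0 < Gamma (s + 1) := Gamma_pos_of_pos (by linarith)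
  have hGamma : ((k + 1).factorial : ℝ) ≤ (s + 1) ^ (k + 1 - s) * Gamma (s + 1) := by
    have := Gamma_add_le_rpow_mul_Gamma (x := s + 1) (θ := k + 1 - s) (by linarith) (by linarith)
      (by linarith)
    rwa [show s + 1 + (k + 1 - s) = ((k + 1 : ℕ) : ℝ) + 1 by push_cast; ring,
      Gamma_nat_eq_factorial] at this
  have hsplit : t ^ s = t ^ k * t ^ (s - k) := by
    rw [← rpow_natCast, ← rpow_add_of_nonneg ht k.cast_nonneg (by linarith), add_sub_cancel]
  have hYoung : t ^ (s - k) * (s + 1) ^ (k + 1 - s) ≤ t + 2 * (k + 1) :=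
    calc t ^ (s - k) * (s + 1) ^ (k + 1 - s) ≤ (s - k) * t + (k + 1 - s) * (s + 1) :=
          geom_mean_le_arith_mean2_weighted (by linarith) (by linarith) ht (by linarith) (by ring)
      _ ≤ t + 2 * (k + 1) := by nlinarith
  calc t ^ s / Gamma (s + 1)
      ≤ t ^ k * (t ^ (s - k) * (s + 1) ^ (k + 1 - s)) / (k + 1).factorial := by
        rw [div_le_div_iff₀ hG (by positivity), hsplit, mul_assoc (t ^ k), mul_assoc (t ^ k),
          mul_assoc (t ^ (s - k))]
        gcongr
    _ ≤ t ^ k * (t + 2 * (k + 1)) / (k + 1).factorial := by gcongr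
    _ = t ^ (k + 1) / (k + 1).factorial + 2 * (t ^ k / k.factorial) := by
        rw [Nat.factorial_succ]
        push_cast
        field_simp
        ring

lemma pow_div_factorial_le_rpow_div_Gamma (ht : 0 < t) (hk : k ≤ s) (hs : s ≤ k + 1) :
    t ^ k / k.factorial * (3 / 4 - (k + 1) / t / 4) ≤ t ^ s / Gamma (s + 1) := by
  have hG : 0 < Gamma (s + 1) := Gamma_pos_of_pos (by linarith [k.cast_nonneg (α := ℝ)])
  have hGamma : Gamma (s + 1) ≤ (k + 1) ^ (s - k) * k.factorial := by
    have := Gamma_add_le_rpow_mul_Gamma (x := k + 1) (θ := s - k) (by positivity) (by linarith)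
      (by linarith)
    rwa [show (k : ℝ) + 1 + (s - k) = s + 1 by ring, Gamma_nat_eq_factorial] at this
  set r : ℝ := (k + 1) / t with hr
  have hr0 : 0 < r := by positivity
  have hlin : 3 / 4 - r / 4 ≤ (r ^ (s - k))⁻¹ := by
    have hrpow : r ^ (s - k) ≤ 1 + r :=
      calc r ^ (s - k) = r ^ (s - k) * 1 ^ (k + 1 - s) := by rw [one_rpow, mul_one]
        _ ≤ (s - k) * r + (k + 1 - s) * 1 :=
          geom_mean_le_arith_mean2_weighted (by linarith) (by linarith) hr0.le zero_le_one (by ring)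
        _ ≤ 1 + r := by nlinarith
    -- the tangent line of `1 / (1 + r)` at `r = 1`
    have htangent : 3 / 4 - r / 4 ≤ (1 + r)⁻¹ := by
      rw [← one_div, le_div_iff₀ (by positivity)]
      nlinarith [sq_nonneg (r - 1)]
    exact htangent.trans (inv_anti₀ (by positivity) hrpow)
  calc t ^ k / k.factorial * (3 / 4 - r / 4) ≤ t ^ k / k.factorial * (r ^ (s - k))⁻¹ := by gcongr
    _ = t ^ s / ((k + 1) ^ (s - k) * k.factorial) := by
        have hsplit : t ^ s = t ^ k * t ^ (s - k) := by
          rw [← rpow_natCast, ← rpow_add ht, add_sub_cancel]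
        rw [hsplit, hr, div_rpow (by positivity) ht.le]
        field_simp
    _ ≤ t ^ s / Gamma (s + 1) := by gcongr

end GammaRatio

section ExponentialSums

variable {α c t : ℝ}

lemma hasSum_pow_div_factorial (t : ℝ) :
    HasSum (fun k : ℕ ↦ t ^ k / (k.factorial : ℝ)) (exp t) := by
  rw [exp_eq_exp_ℝ]
  exact NormedSpace.expSeries_div_hasSum_exp t

lemma hasSum_pow_succ_div_factorial (t : ℝ) :
    HasSum (fun k : ℕ ↦ t ^ (k + 1) / ((k + 1).factorial : ℝ)) (exp t - 1) := by
  simpa using (hasSum_nat_add_iff' 1).2 (hasSum_pow_div_factorial t)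

lemma hasSum_pow_div_factorial_mul_succ (t : ℝ) :
    HasSum (fun k : ℕ ↦ t ^ k / (k.factorial : ℝ) * (k + 1)) ((t + 1) * exp t) := by
  have hmul : HasSum (fun k : ℕ ↦ t ^ k / (k.factorial : ℝ) * k) (t * exp t) := by
    rw [← hasSum_nat_add_iff' 1]
    simp only [Finset.sum_range_one, Nat.cast_zero, mul_zero, sub_zero]
    convert! (hasSum_pow_div_factorial t).mul_left t using 2 with k
    rw [Nat.factorial_succ]
    push_cast
    field_simp
    exact pow_succ' t k
  simpa only [mul_add, mul_one, add_mul, one_mul] using hmul.add (hasSum_pow_div_factorial t)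

lemma rpow_div_Gamma_nonneg {s : ℝ} (ht : 0 ≤ t) (hs : 0 ≤ s) : 0 ≤ t ^ s / Gamma (s + 1) :=
  div_nonneg (rpow_nonneg ht s) (Gamma_pos_of_pos (by linarith)).le

-- The integer parts of `α j + c` are pairwise distinct, so each term is charged to its own `k`.
lemma summable_and_tsum_rpow_div_Gamma_le_of_one_le (hα : 1 ≤ α) (hc : 0 ≤ c) (ht : 0 ≤ t) :
    Summable (fun j : ℕ ↦ t ^ (α * j + c) / Gamma (α * j + c + 1)) ∧
      ∑' j : ℕ, t ^ (α * j + c) / Gamma (α * j + c + 1) ≤ 3 * exp t := by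
  have hs (j : ℕ) : 0 ≤ α * j + c := by positivity
  let g : ℕ → ℝ := fun k ↦ t ^ (k + 1) / (k + 1).factorial + 2 * (t ^ k / k.factorial)
  have hg : HasSum g (exp t - 1 + 2 * exp t) :=
    (hasSum_pow_succ_div_factorial t).add ((hasSum_pow_div_factorial t).mul_left 2)
  let φ : ℕ → ℕ := fun j ↦ ⌊α * j + c⌋₊
  have hφ : StrictMono φ := strictMono_nat_of_lt_succ fun j ↦ by
    rw [Nat.lt_iff_add_one_le, ← Nat.floor_add_one (hs j)]
    refine Nat.floor_le_floor ?_
    push_cast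
    linarith
  have hle (j : ℕ) : t ^ (α * j + c) / Gamma (α * j + c + 1) ≤ (g ∘ φ) j :=
    rpow_div_Gamma_le_pow_div_factorial ht (Nat.floor_le (hs j)) (Nat.lt_floor_add_one _)
  have hgφ : Summable (g ∘ φ) := hg.summable.comp_injective hφ.injective
  have hsum := Summable.of_nonneg_of_le (fun j ↦ rpow_div_Gamma_nonneg ht (hs j)) hle hgφ
  refine ⟨hsum, ?_⟩
  calc ∑' j : ℕ, t ^ (α * j + c) / Gamma (α * j + c + 1) ≤ ∑' j, (g ∘ φ) j :=
        hsum.tsum_le_tsum hle hgφ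
    _ ≤ ∑' k, g k := tsum_comp_le_tsum_of_inj hg.summable
        (fun k ↦ by simp only [g]; positivity) hφ.injective
    _ = exp t - 1 + 2 * exp t := hg.tsum_eq
    _ ≤ 3 * exp t := by linarith

lemma summable_and_tsum_rpow_div_Gamma_le (hα : 0 < α) (hc : 0 ≤ c) (ht : 0 ≤ t) :
    Summable (fun j : ℕ ↦ t ^ (α * j + c) / Gamma (α * j + c + 1)) ∧
      ∑' j : ℕ, t ^ (α * j + c) / Gamma (α * j + c + 1) ≤ ⌈1 / α⌉₊ * (3 * exp t) := by
  set N := ⌈1 / α⌉₊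
  have : NeZero N := ⟨(Nat.ceil_pos.2 (by positivity)).ne'⟩
  have hαN : 1 ≤ α * N := by
    rw [← div_le_iff₀' hα]
    exact Nat.le_ceil _
  let f : ℕ → ℝ := fun j ↦ t ^ (α * j + c) / Gamma (α * j + c + 1)
  let e : Fin N × ℕ ≃ ℕ := (Equiv.prodComm _ _).trans (Nat.divModEquiv N).symm
  have hresidue (r : Fin N) : Summable (fun i ↦ f (e (r, i))) ∧ ∑' i, f (e (r, i)) ≤ 3 * exp t := by
    have hfe (i : ℕ) : f (e (r, i)) = t ^ (α * N * i + (α * r + c)) /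
        Gamma (α * N * i + (α * r + c) + 1) := by
      simp only [f, e, Equiv.trans_apply, Equiv.prodComm_apply, Prod.swap_prod_mk,
        Nat.divModEquiv_symm_apply]
      push_cast
      ring_nf
    simp_rw [hfe]
    exact summable_and_tsum_rpow_div_Gamma_le_of_one_le hαN (by positivity) ht
  have hsum : Summable (f ∘ e) := (summable_prod_of_nonneg fun p ↦
    rpow_div_Gamma_nonneg ht (by positivity)).2 ⟨fun r ↦ (hresidue r).1, .of_finite⟩
  refine ⟨e.summable_iff.1 hsum, ?_⟩
  calc ∑' j, f j = ∑' p, f (e p) := (e.tsum_eq f).symm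
    _ = ∑' r, ∑' i, f (e (r, i)) := hsum.tsum_prod
    _ = ∑ r, ∑' i, f (e (r, i)) := tsum_fintype _
    _ ≤ ∑ _r : Fin N, 3 * exp t := Finset.sum_le_sum fun r _ ↦ (hresidue r).2
    _ = N * (3 * exp t) := by simp

-- Dual to the upper bound: every `k` is charged to the term `j = ⌈k / α⌉`.
lemma exp_div_four_le_tsum_rpow_div_Gamma (hα : 0 < α) (hα1 : α ≤ 1) (ht : 1 ≤ t) :
    exp t / 4 ≤ ∑' j : ℕ, t ^ (α * j) / Gamma (α * j + 1) := by
  have ht0 : 0 < t := by linarith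
  let f : ℕ → ℝ := fun j ↦ t ^ (α * j) / Gamma (α * j + 1)
  have hf : Summable f := by
    simpa only [add_zero] using (summable_and_tsum_rpow_div_Gamma_le hα le_rfl ht0.le).1
  let ψ : ℕ → ℕ := fun k ↦ ⌈k / α⌉₊
  have hψ_ge (k : ℕ) : k ≤ α * ψ k := (div_le_iff₀' hα).1 (Nat.le_ceil _)
  have hψ_lt (k : ℕ) : α * ψ k < k + 1 := by
    calc α * ψ k < α * (k / α + 1) := by gcongr; exact Nat.ceil_lt_add_one (by positivity)
      _ = k + α := by field_simp
      _ ≤ k + 1 := by gcongr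
  have hψ : StrictMono ψ := strictMono_nat_of_lt_succ fun k ↦ by
    have : α * ψ k < α * ψ (k + 1) := (hψ_lt k).trans_le (by exact_mod_cast hψ_ge (k + 1))
    exact_mod_cast lt_of_mul_lt_mul_left this hα.le
  have hlin : HasSum (fun k : ℕ ↦ t ^ k / k.factorial * (3 / 4 - (k + 1) / t / 4))
      (exp t * (3 / 4) - (t + 1) * exp t / (4 * t)) := by
    convert! ((hasSum_pow_div_factorial t).mul_right (3 / 4)).sub
      ((hasSum_pow_div_factorial_mul_succ t).div_const (4 * t)) using 2 with k
    ring
  calc exp t / 4 ≤ exp t * (3 / 4) - (t + 1) * exp t / (4 * t) := by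
        rw [le_sub_iff_add_le, ← le_sub_iff_add_le', div_le_iff₀ (by positivity)]
        nlinarith [exp_pos t]
    _ ≤ ∑' k, f (ψ k) := by
        rw [← hlin.tsum_eq]
        exact hlin.summable.tsum_le_tsum
          (fun k ↦ pow_div_factorial_le_rpow_div_Gamma ht0 (hψ_ge k) (hψ_lt k).le)
          (hf.comp_injective hψ.injective)
    _ ≤ ∑' j, f j := tsum_comp_le_tsum_of_inj hf
        (fun j ↦ rpow_div_Gamma_nonneg ht0.le (by positivity)) hψ.injective

end ExponentialSums

section MittagLeffler

variable {α b t z : ℝ}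

lemma summable_norm_ML (hα : 0 < α) (hb : 0 < b) (z : ℝ) :
    Summable (fun j : ℕ ↦ ‖z ^ j / Gamma (α * j + b)‖) := by
  have hGamma_pos (j : ℕ) : 0 < Gamma (α * j + b) := Gamma_pos_of_pos (by positivity)
  obtain ⟨N, hN⟩ := exists_nat_ge (1 / α)
  have hc : 0 ≤ α * N + b - 1 := by linarith [(div_le_iff₀' hα).1 hN]
  have hpos : Summable (fun j : ℕ ↦ (|z| + 1) ^ j / Gamma (α * j + b)) := by
    rw [← summable_nat_add_iff N]
    set t := (|z| + 1) ^ (1 / α) with ht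
    have ht0 : 0 < t := by positivity
    have htα : t ^ α = |z| + 1 := by rw [ht, one_div, rpow_inv_rpow (by positivity) hα.ne']
    refine ((summable_and_tsum_rpow_div_Gamma_le hα hc ht0.le).1.mul_left (t ^ (1 - b))).congr
      fun j ↦ ?_
    rw [← htα, ← rpow_natCast, ← rpow_mul ht0.le, ← mul_div_assoc, ← rpow_add ht0]
    push_cast
    ring_nf
  refine hpos.of_nonneg_of_le (fun _ ↦ norm_nonneg _) fun j ↦ ?_
  rw [norm_div, norm_pow, norm_of_nonneg (hGamma_pos j).le, norm_eq_abs]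
  have := hGamma_pos j
  gcongr
  linarith

lemma continuous_ML (hα : 0 < α) (hb : 0 < b) : Continuous (ML α b) := by
  refine continuous_iff_continuousAt.2 fun z ↦ ?_
  have hball : ContinuousOn (ML α b) (Metric.ball 0 (|z| + 1)) := by
    refine continuousOn_tsum (fun j ↦ by fun_prop) (summable_norm_ML hα hb (|z| + 1))
      fun j w hw ↦ ?_
    rw [norm_div, norm_div, norm_pow, norm_pow, norm_of_nonneg (by positivity : 0 ≤ |z| + 1)]
    gcongr
    exact (mem_ball_zero_iff.1 hw).le
  exact hball.continuousAt (Metric.isOpen_ball.mem_nhds (by simp))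

lemma ML_nonneg (hα : 0 < α) (hb : 0 < b) (hz : 0 ≤ z) : 0 ≤ ML α b z :=
  tsum_nonneg fun j ↦ div_nonneg (pow_nonneg hz j) (Gamma_pos_of_pos (by positivity)).le

lemma monotoneOn_ML (hα : 0 < α) (hb : 0 < b) : MonotoneOn (ML α b) (Set.Ici 0) :=
  fun z hz w _ hzw ↦ (summable_norm_ML hα hb z).of_norm.tsum_le_tsum
    (fun j ↦ div_le_div_of_nonneg_right (pow_le_pow_left₀ hz hzw j)
      (Gamma_pos_of_pos (by positivity)).le) (summable_norm_ML hα hb w).of_norm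

lemma ML_eq_one_div_Gamma_add (hα : 0 < α) (hb : 0 < b) (z : ℝ) :
    ML α b z = 1 / Gamma b + z * ML α (b + α) z := by
  unfold ML
  rw [(summable_norm_ML hα hb z).of_norm.tsum_eq_zero_add, ← tsum_mul_left]
  congr 1
  · simp
  · refine tsum_congr fun j ↦ ?_
    push_cast
    rw [pow_succ', mul_div_assoc]
    ring_nf

lemma ML_zero (hα : 0 < α) (hb : 0 < b) :
    ML α b 0 = 1 / Gamma b := by
  simpa using ML_eq_one_div_Gamma_add hα hb 0

lemma ML_one_rpow_eq_tsum (ht : 0 ≤ t) :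
    ML α 1 (t ^ α) = ∑' j : ℕ, t ^ (α * j) / Gamma (α * j + 1) :=
  tsum_congr fun j ↦ by rw [rpow_mul ht, rpow_natCast]

lemma ML_one_rpow_le_exp (hα : 0 < α) (ht : 0 ≤ t) :
    ML α 1 (t ^ α) ≤ ⌈1 / α⌉₊ * (3 * exp t) := by
  rw [ML_one_rpow_eq_tsum ht]
  simpa only [add_zero] using (summable_and_tsum_rpow_div_Gamma_le hα le_rfl ht).2

lemma exp_div_four_le_ML_one_rpow (hα : 0 < α) (hα1 : α ≤ 1) (ht : 1 ≤ t) :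
    exp t / 4 ≤ ML α 1 (t ^ α) := by
  rw [ML_one_rpow_eq_tsum (zero_le_one.trans ht)]
  exact exp_div_four_le_tsum_rpow_div_Gamma hα hα1 ht

end MittagLeffler

section FractionalIntegral

variable {α b c γ p q t : ℝ}

lemma integral_sub_rpow_mul_rpow (hp : 0 < p) (hq : 0 < q) (ht : 0 < t) :
    ∫ s in 0..t, (t - s) ^ (q - 1) * s ^ (p - 1) =
      t ^ (p + q - 1) * ProbabilityTheory.beta p q := by
  have hcomplex : ((∫ s in 0..t, (t - s) ^ (q - 1) * s ^ (p - 1) : ℝ) : ℂ) =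
      ∫ s in 0..t, (s : ℂ) ^ ((p : ℂ) - 1) * ((t : ℂ) - s) ^ ((q : ℂ) - 1) := by
    rw [← intervalIntegral.integral_ofReal]
    refine integral_congr fun s hs ↦ ?_
    rw [Set.uIcc_of_le ht.le] at hs
    simp only [Complex.ofReal_mul, Complex.ofReal_cpow (sub_nonneg.2 hs.2),
      Complex.ofReal_cpow hs.1, Complex.ofReal_sub, Complex.ofReal_one]
    exact mul_comm _ _
  rw [← Complex.ofReal_re (∫ s in 0..t, (t - s) ^ (q - 1) * s ^ (p - 1)), hcomplex,
    Complex.betaIntegral_scaled _ _ ht, ProbabilityTheory.beta_eq_betaIntegralReal p q hp hq,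
    ← Complex.re_ofReal_mul, Complex.ofReal_cpow ht.le]
  push_cast
  rfl

lemma intervalIntegrable_sub_rpow_mul_rpow (hp : 0 < p) (hq : 0 < q) (ht : 0 < t) :
    IntervalIntegrable (fun s ↦ (t - s) ^ (q - 1) * s ^ (p - 1)) volume 0 t := by
  refine intervalIntegrable_of_integral_ne_zero ?_
  rw [integral_sub_rpow_mul_rpow hp hq ht]
  exact (mul_pos (rpow_pos_of_pos ht _) (ProbabilityTheory.beta_pos hp hq)).ne'

lemma intervalIntegrable_sub_rpow (hγ : 0 < γ) (a t : ℝ) :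
    IntervalIntegrable (fun s ↦ (t - s) ^ (γ - 1)) volume a t := by
  simpa using ((intervalIntegrable_rpow' (r := γ - 1) (a := 0) (b := t - a)
    (by linarith)).comp_sub_left t).symm

lemma integral_sub_rpow (hγ : 0 < γ) (a t : ℝ) :
    ∫ s in a..t, (t - s) ^ (γ - 1) = (t - a) ^ γ / γ := by
  rw [integral_comp_sub_left (fun x ↦ x ^ (γ - 1)), integral_rpow (Or.inl (by linarith))]
  simp [hγ.ne']

/-- The Riemann–Liouville fractional integral of order `γ` with base point `0`. -/
noncomputable def fracIntegral (γ : ℝ) (f : ℝ → ℝ) (t : ℝ) : ℝ :=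
  (Gamma γ)⁻¹ * ∫ s in 0..t, (t - s) ^ (γ - 1) * f s

/-- The Mittag-Leffler kernel `s ↦ s ^ (b - 1) * E_{α,b}(c * s ^ α)`; fractional integration acts
on it by shifting `b`. -/
noncomputable def MLkernel (α b c s : ℝ) : ℝ := s ^ (b - 1) * ML α b (c * s ^ α)

lemma MLkernel_one (α c s : ℝ) : MLkernel α 1 c s = ML α 1 (c * s ^ α) := by
  simp [MLkernel]

lemma continuousOn_MLkernel (hα : 0 < α) (hb : 0 < b) (c : ℝ) :
    ContinuousOn (MLkernel α b c) (Set.Ioi 0) :=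
  (continuousOn_id.rpow_const fun _ hs ↦ Or.inl (ne_of_gt hs)).mul
    ((continuous_ML hα hb).comp ((continuous_rpow_const hα.le).const_mul c)).continuousOn

lemma intervalIntegrable_sub_rpow_mul_MLkernel (hα : 0 < α) (hb : 0 < b) (hγ : 0 < γ) (ht : 0 < t)
    (c : ℝ) : IntervalIntegrable (fun s ↦ (t - s) ^ (γ - 1) * MLkernel α b c s) volume 0 t := by
  have hcont : Continuous (fun s : ℝ ↦ ML α b (c * s ^ α)) :=
    (continuous_ML hα hb).comp ((continuous_rpow_const hα.le).const_mul c)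
  simpa only [MLkernel, mul_assoc] using
    (intervalIntegrable_sub_rpow_mul_rpow hb hγ ht).mul_continuousOn hcont.continuousOn

lemma integral_sub_rpow_mul_const_mul_rpow (hα : 0 < α) (hb : 0 < b) (hγ : 0 < γ) (ht : 0 < t)
    (c : ℝ) (j : ℕ) :
    ∫ s in 0..t, (t - s) ^ (γ - 1) * (c ^ j / Gamma (α * j + b) * s ^ (α * j + b - 1)) =
      Gamma γ * t ^ (b + γ - 1) * ((c * t ^ α) ^ j / Gamma (α * j + (b + γ))) := by
  have hGamma : Gamma (α * j + b) ≠ 0 := (Gamma_pos_of_pos (by positivity)).ne'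
  have hpow : t ^ (α * j + b + γ - 1) = t ^ (b + γ - 1) * (t ^ α) ^ j := by
    rw [← rpow_natCast, ← rpow_mul ht.le, ← rpow_add ht]
    ring_nf
  simp_rw [mul_left_comm ((t - _) ^ (γ - 1))]
  rw [intervalIntegral.integral_const_mul, integral_sub_rpow_mul_rpow (by positivity) hγ ht, hpow,
    ProbabilityTheory.beta, mul_pow, ← add_assoc]
  field_simp

lemma fracIntegral_MLkernel (hα : 0 < α) (hb : 0 < b) (hγ : 0 < γ) (ht : 0 < t) (c : ℝ) :
    fracIntegral γ (MLkernel α b c) t = MLkernel α (b + γ) c t := by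
  let F : ℝ → ℕ → ℝ → ℝ := fun c j s ↦
    (t - s) ^ (γ - 1) * (c ^ j / Gamma (α * j + b) * s ^ (α * j + b - 1))
  have hF (c : ℝ) (j : ℕ) : ∫ s in Set.Ioc 0 t, F c j s =
      Gamma γ * t ^ (b + γ - 1) * ((c * t ^ α) ^ j / Gamma (α * j + (b + γ))) := by
    rw [← integral_of_le ht.le, integral_sub_rpow_mul_const_mul_rpow hα hb hγ ht]
  have hF_norm (j : ℕ) : ∫ s in Set.Ioc 0 t, ‖F c j s‖ = ∫ s in Set.Ioc 0 t, F |c| j s := by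
    refine setIntegral_congr_fun measurableSet_Ioc fun s hs ↦ ?_
    have hGamma : 0 < Gamma (α * j + b) := Gamma_pos_of_pos (by positivity)
    simp only [F, norm_mul, norm_div, norm_pow, norm_eq_abs, abs_of_pos hGamma,
      abs_of_nonneg (rpow_nonneg (sub_nonneg.2 hs.2) _), abs_of_nonneg (rpow_nonneg hs.1.le _)]
  have hF_int (j : ℕ) : Integrable (F c j) (volume.restrict (Set.Ioc 0 t)) := by
    refine (intervalIntegrable_iff_integrableOn_Ioc_of_le ht.le).1 ?_
    simpa only [F, mul_left_comm] using
      (intervalIntegrable_sub_rpow_mul_rpow (p := α * j + b) (by positivity) hγ ht).const_mul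
        (c ^ j / Gamma (α * j + b))
  have hsummable : Summable fun j ↦ ∫ s in Set.Ioc 0 t, ‖F c j s‖ := by
    simp_rw [hF_norm, hF]
    exact (summable_norm_ML hα (by positivity) (|c| * t ^ α)).of_norm.mul_left _
  have hterm (s : ℝ) (hs : s ∈ Set.Ioc 0 t) :
      (t - s) ^ (γ - 1) * MLkernel α b c s = ∑' j, F c j s := by
    rw [tsum_mul_left, MLkernel, ML, ← tsum_mul_left]
    congr 1
    refine tsum_congr fun j ↦ ?_
    rw [mul_pow, ← rpow_natCast (s ^ α), ← rpow_mul hs.1.le, add_sub_assoc, rpow_add hs.1]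
    ring
  rw [fracIntegral, integral_of_le ht.le, setIntegral_congr_fun measurableSet_Ioc hterm,
    ← integral_tsum_of_summable_integral_norm hF_int hsummable]
  simp_rw [hF]
  rw [tsum_mul_left, mul_assoc, inv_mul_cancel_left₀ (Gamma_pos_of_pos hγ).ne', MLkernel, ML]

lemma MLkernel_eq_add_fracIntegral (hα : 0 < α) (hb : 0 < b) (ht : 0 < t) (c : ℝ) :
    MLkernel α b c t = t ^ (b - 1) / Gamma b + c * fracIntegral α (MLkernel α b c) t := by
  rw [fracIntegral_MLkernel hα hb hα ht, MLkernel, MLkernel, ML_eq_one_div_Gamma_add hα hb,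
    show b + α - 1 = b - 1 + α by ring, rpow_add ht]
  ring

end FractionalIntegral

section Positivity

variable {α b κ t z : ℝ} {f g : ℝ → ℝ}

lemma exists_first_nonpos (hg : ContinuousOn g (Set.Ioi 0)) (hg0 : ∀ᶠ s in 𝓝[>] 0, 0 < g s)
    (ht : 0 < t) (hgt : g t ≤ 0) : ∃ t₀ > 0, g t₀ ≤ 0 ∧ ∀ s ∈ Set.Ioo 0 t₀, 0 < g s := by
  obtain ⟨ε, hε, hεg⟩ := mem_nhdsGT_iff_exists_Ioo_subset.1 hg0
  have hεpos : 0 < ε := hε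
  have hclosed : IsClosed (Set.Icc (ε / 2) t ∩ g ⁻¹' Set.Iic 0) :=
    (hg.mono fun s hs ↦ (half_pos hεpos).trans_le hs.1).preimage_isClosed_of_isClosed
      isClosed_Icc isClosed_Iic
  have hεt : ε ≤ t := not_lt.1 fun h ↦ hgt.not_gt (hεg ⟨ht, h⟩)
  obtain ⟨t₀, ⟨ht₀, hgt₀⟩, hleast⟩ :=
    (isCompact_Icc.of_isClosed_subset hclosed Set.inter_subset_left).exists_isLeast
      ⟨t, ⟨by linarith, le_rfl⟩, hgt⟩
  refine ⟨t₀, (half_pos hεpos).trans_le ht₀.1, hgt₀, fun s hs ↦ ?_⟩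
  by_contra! hgs
  have hεs : ε ≤ s := not_lt.1 fun h ↦ hgs.not_gt (hεg ⟨hs.1, h⟩)
  exact (hleast ⟨⟨by linarith, hs.2.le.trans ht₀.2⟩, hgs⟩).not_gt hs.2

-- Since `(t₀ - s) / (t₁ - s) ≥ t₀ / t₁`, the weight of the past `[0, t₁]` decays at least by the
-- factor `(t₀ / t₁) ^ (α - 1)`.
lemma fracIntegral_le_mul_add {t₀ t₁ : ℝ} (hα : 0 < α) (hα1 : α ≤ 1) (ht₁ : 0 < t₁) (ht : t₁ < t₀)
    (hg : ∀ s ∈ Set.Ioo 0 t₁, 0 ≤ g s)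
    (hint : ∀ t > 0, IntervalIntegrable (fun s ↦ (t - s) ^ (α - 1) * g s) volume 0 t) :
    fracIntegral α g t₀ ≤ (t₀ / t₁) ^ (α - 1) * fracIntegral α g t₁ +
      (Gamma α)⁻¹ * ∫ s in t₁..t₀, (t₀ - s) ^ (α - 1) * g s := by
  have ht₀ : 0 < t₀ := ht₁.trans ht
  have hleft : IntervalIntegrable (fun s ↦ (t₀ - s) ^ (α - 1) * g s) volume 0 t₁ :=
    (hint t₀ ht₀).mono_set
      (Set.uIcc_subset_uIcc_left (Set.mem_uIcc_of_le ht₁.le ht.le))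
  have hright : IntervalIntegrable (fun s ↦ (t₀ - s) ^ (α - 1) * g s) volume t₁ t₀ :=
    (hint t₀ ht₀).mono_set
      (Set.uIcc_subset_uIcc_right (Set.mem_uIcc_of_le ht₁.le ht.le))
  have hpast : ∫ s in 0..t₁, (t₀ - s) ^ (α - 1) * g s ≤
      (t₀ / t₁) ^ (α - 1) * ∫ s in 0..t₁, (t₁ - s) ^ (α - 1) * g s := by
    rw [← intervalIntegral.integral_const_mul]
    refine integral_mono_on_of_le_Ioo ht₁.le hleft ((hint t₁ ht₁).const_mul _) fun s hs ↦ ?_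
    have hst : 0 < t₁ - s := sub_pos.2 hs.2
    rw [← mul_assoc, ← mul_rpow (by positivity) hst.le]
    refine mul_le_mul_of_nonneg_right ?_ (hg s hs)
    refine rpow_le_rpow_of_nonpos (by positivity) ?_ (by linarith)
    rw [div_mul_eq_mul_div, div_le_iff₀ ht₁]
    nlinarith [hs.1]
  rw [fracIntegral, fracIntegral, ← integral_add_adjacent_intervals hleft hright, mul_add,
    mul_left_comm]
  gcongr

lemma integral_sub_rpow_mul_le {a M : ℝ} (hα : 0 < α) (hat : a ≤ t)
    (hint : IntervalIntegrable (fun s ↦ (t - s) ^ (α - 1) * g s) volume a t)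
    (hg : ∀ s ∈ Set.Icc a t, g s ≤ M) :
    ∫ s in a..t, (t - s) ^ (α - 1) * g s ≤ (t - a) ^ α / α * M :=
  calc ∫ s in a..t, (t - s) ^ (α - 1) * g s ≤ ∫ s in a..t, (t - s) ^ (α - 1) * M :=
        integral_mono_on hat hint ((intervalIntegrable_sub_rpow hα a t).mul_const _) fun s hs ↦
          mul_le_mul_of_nonneg_left (hg s hs) (rpow_nonneg (sub_nonneg.2 hs.2) _)
    _ = (t - a) ^ α / α * M := by rw [intervalIntegral.integral_mul_const, integral_sub_rpow hα]

lemma mul_le_of_eq_sub_fracIntegral {t₀ t₁ : ℝ} (hα : 0 < α) (hα1 : α ≤ 1) (hκ : 0 ≤ κ)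
    (hint : ∀ t > 0, IntervalIntegrable (fun s ↦ (t - s) ^ (α - 1) * g s) volume 0 t)
    (hf : ∀ s > 0, ∀ t > s, (t / s) ^ (α - 1) * f s ≤ f t)
    (heq : ∀ t > 0, g t = f t - κ * fracIntegral α g t)
    (ht₁ : 0 < t₁) (ht : t₁ < t₀) (ht₀ : t₀ ≤ 2 * t₁) (hg : ∀ s ∈ Set.Ioc 0 t₁, 0 ≤ g s)
    (hmax : ∀ s ∈ Set.Icc t₁ t₀, g s ≤ g t₁) :
    (1 / 2 - κ * ((Gamma α)⁻¹ * ((t₀ - t₁) ^ α / α))) * g t₁ ≤ g t₀ := by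
  have ht₀pos : 0 < t₀ := ht₁.trans ht
  have hgt₁ : 0 ≤ g t₁ := hg t₁ ⟨ht₁, le_rfl⟩
  have hratio : 1 / 2 ≤ (t₀ / t₁) ^ (α - 1) :=
    calc (1 / 2 : ℝ) = 2 ^ (-1 : ℝ) := by rw [rpow_neg_one, one_div]
      _ ≤ (t₀ / t₁) ^ (-1 : ℝ) := rpow_le_rpow_of_nonpos (div_pos ht₀pos ht₁)
          ((div_le_iff₀ ht₁).2 ht₀) (by norm_num)
      _ ≤ (t₀ / t₁) ^ (α - 1) := rpow_le_rpow_of_exponent_le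
          ((one_le_div ht₁).2 ht.le) (by linarith)
  have hrecent : ∫ s in t₁..t₀, (t₀ - s) ^ (α - 1) * g s ≤ (t₀ - t₁) ^ α / α * g t₁ :=
    integral_sub_rpow_mul_le hα ht.le ((hint t₀ ht₀pos).mono_set
      (Set.uIcc_subset_uIcc_right (Set.mem_uIcc_of_le ht₁.le ht.le))) hmax
  have hfrac : fracIntegral α g t₀ ≤ (t₀ / t₁) ^ (α - 1) * fracIntegral α g t₁ +
      (Gamma α)⁻¹ * ((t₀ - t₁) ^ α / α * g t₁) :=
    (fracIntegral_le_mul_add hα hα1 ht₁ ht (fun s hs ↦ hg s ⟨hs.1, hs.2.le⟩) hint).trans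
      (by gcongr)
  calc (1 / 2 - κ * ((Gamma α)⁻¹ * ((t₀ - t₁) ^ α / α))) * g t₁
      ≤ ((t₀ / t₁) ^ (α - 1) - κ * ((Gamma α)⁻¹ * ((t₀ - t₁) ^ α / α))) * g t₁ := by gcongr
    _ = (t₀ / t₁) ^ (α - 1) * f t₁ - κ * ((t₀ / t₁) ^ (α - 1) * fracIntegral α g t₁ +
          (Gamma α)⁻¹ * ((t₀ - t₁) ^ α / α * g t₁)) := by rw [sub_mul, heq t₁ ht₁]; ring
    _ ≤ f t₀ - κ * fracIntegral α g t₀ := by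
        gcongr
        exact hf t₁ ht₁ t₀ ht
    _ = g t₀ := (heq t₀ ht₀pos).symm

-- Compare a first zero `t₀` with the maximum of `g` over a short interval `[t₀ - δ, t₀]`: the
-- equation lets `g` drop from there to `t₀` by at most a factor bounded below.
lemma pos_of_eq_sub_fracIntegral (hα : 0 < α) (hα1 : α ≤ 1) (hκ : 0 ≤ κ)
    (hg : ContinuousOn g (Set.Ioi 0)) (hg0 : ∀ᶠ s in 𝓝[>] 0, 0 < g s)
    (hint : ∀ t > 0, IntervalIntegrable (fun s ↦ (t - s) ^ (α - 1) * g s) volume 0 t)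
    (hf : ∀ s > 0, ∀ t > s, (t / s) ^ (α - 1) * f s ≤ f t)
    (heq : ∀ t > 0, g t = f t - κ * fracIntegral α g t) (ht : 0 < t) : 0 < g t := by
  by_contra! hgt
  obtain ⟨t₀, ht₀, hgt₀, hpos⟩ := exists_first_nonpos hg hg0 ht hgt
  obtain ⟨δ, hκδ, hδ, hδt₀⟩ :
      ∃ δ, κ * ((Gamma α)⁻¹ * (δ ^ α / α)) < 1 / 2 ∧ 0 < δ ∧ δ < t₀ / 2 := by
    have hcont : ContinuousAt (fun δ : ℝ ↦ κ * ((Gamma α)⁻¹ * (δ ^ α / α))) 0 :=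
      (((continuous_rpow_const hα.le).div_const α).const_mul _).const_mul κ |>.continuousAt
    have hlt : ∀ᶠ δ in 𝓝 (0 : ℝ), κ * ((Gamma α)⁻¹ * (δ ^ α / α)) < 1 / 2 :=
      hcont.eventually_lt_const (by simp [zero_rpow hα.ne'])
    exact ((hlt.filter_mono nhdsWithin_le_nhds).and (Ioo_mem_nhdsGT (half_pos ht₀))).exists
  obtain ⟨t₁, ht₁, hmax⟩ := isCompact_Icc.exists_isMaxOn (Set.nonempty_Icc.2 (by linarith))
    (hg.mono fun s (hs : s ∈ Set.Icc (t₀ - δ) t₀) ↦ show 0 < s by linarith [hs.1])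
  have ht₁pos : 0 < t₁ := by linarith [ht₁.1]
  have hgt₁ : 0 < g t₁ := (hpos (t₀ - δ) ⟨by linarith, by linarith⟩).trans_le
    (hmax ⟨le_rfl, by linarith⟩)
  have ht₁₀ : t₁ < t₀ := ht₁.2.lt_of_ne fun h ↦ hgt₀.not_gt (h ▸ hgt₁)
  have hδle : (t₀ - t₁) ^ α ≤ δ ^ α :=
    rpow_le_rpow (by linarith) (by linarith [ht₁.1]) hα.le
  have hfactor : 0 < 1 / 2 - κ * ((Gamma α)⁻¹ * ((t₀ - t₁) ^ α / α)) :=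
    sub_pos.2 (hκδ.trans_le' (by gcongr))
  refine hgt₀.not_gt ((mul_pos hfactor hgt₁).trans_le ?_)
  exact mul_le_of_eq_sub_fracIntegral hα hα1 hκ hint hf heq ht₁pos ht₁₀ (by linarith [ht₁.1])
    (fun s hs ↦ (hpos s ⟨hs.1, hs.2.trans_lt ht₁₀⟩).le) fun s hs ↦ hmax ⟨ht₁.1.trans hs.1, hs.2⟩

lemma MLkernel_neg_pos (hα : 0 < α) (hα1 : α ≤ 1) (hb : α ≤ b) (hκ : 0 ≤ κ) (ht : 0 < t) :
    0 < MLkernel α b (-κ) t := by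
  have hb0 : 0 < b := hα.trans_le hb
  have hGamma := Gamma_pos_of_pos hb0
  have hnear : ∀ᶠ s in 𝓝[>] 0, 0 < MLkernel α b (-κ) s := by
    have hcont : Continuous fun s : ℝ ↦ ML α b (-κ * s ^ α) :=
      (continuous_ML hα hb0).comp ((continuous_rpow_const hα.le).const_mul _)
    have hpos : ∀ᶠ s in 𝓝 (0 : ℝ), 0 < ML α b (-κ * s ^ α) :=
      hcont.continuousAt.eventually_const_lt (by simp [zero_rpow hα.ne', ML_zero hα hb0, hGamma])
    filter_upwards [hpos.filter_mono nhdsWithin_le_nhds, self_mem_nhdsWithin] with s hs hs0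
    exact mul_pos (rpow_pos_of_pos hs0 _) hs
  refine pos_of_eq_sub_fracIntegral (f := fun t ↦ t ^ (b - 1) / Gamma b) hα hα1 hκ
    (continuousOn_MLkernel hα hb0 _) hnear
    (fun t ht ↦ intervalIntegrable_sub_rpow_mul_MLkernel hα hb0 hα ht _) (fun s hs t hst ↦ ?_)
    (fun t ht ↦ by rw [MLkernel_eq_add_fracIntegral hα hb0 ht]; ring) ht
  have hts : 1 ≤ t / s := (one_le_div hs).2 hst.le
  calc (t / s) ^ (α - 1) * (s ^ (b - 1) / Gamma b)
      ≤ (t / s) ^ (b - 1) * (s ^ (b - 1) / Gamma b) := by gcongr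
    _ = t ^ (b - 1) / Gamma b := by
        rw [← mul_div_assoc, ← mul_rpow (by positivity) hs.le, div_mul_cancel₀ _ hs.ne']

lemma ML_one_nonneg (hα : 0 < α) (hα1 : α ≤ 1) (z : ℝ) : 0 ≤ ML α 1 z := by
  rcases le_total 0 z with hz | hz
  · exact ML_nonneg hα one_pos hz
  · simpa [MLkernel_one] using (MLkernel_neg_pos hα hα1 hα1 (neg_nonneg.2 hz) one_pos).le

lemma antitoneOn_MLkernel_one_neg (hα : 0 < α) (hα1 : α ≤ 1) (hκ : 0 ≤ κ) :
    AntitoneOn (MLkernel α 1 (-κ)) (Set.Ioi 0) := by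
  have hint (t : ℝ) (ht : 0 < t) : IntervalIntegrable (MLkernel α α (-κ)) volume 0 t := by
    simpa using intervalIntegrable_sub_rpow_mul_MLkernel hα hα one_pos ht (-κ)
  have heq (t : ℝ) (ht : 0 < t) :
      MLkernel α 1 (-κ) t = 1 - κ * ∫ s in 0..t, MLkernel α α (-κ) s := by
    have hfrac := fracIntegral_MLkernel hα hα one_pos ht (-κ)
    simp only [fracIntegral, Gamma_one, inv_one, one_mul, sub_self, rpow_zero] at hfrac
    rw [hfrac, MLkernel_one, MLkernel, ML_eq_one_div_Gamma_add hα one_pos, Gamma_one,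
      add_sub_cancel_right, add_comm 1 α]
    ring
  intro s hs t ht hst
  rw [heq s hs, heq t ht]
  gcongr
  refine integral_mono_interval le_rfl (le_of_lt hs) hst ?_ (hint t ht)
  filter_upwards [ae_restrict_mem measurableSet_Ioc] with r hr
  exact (MLkernel_neg_pos hα hα1 le_rfl hκ hr.1).le

lemma ML_neg_mul_le_one (hα : 0 < α) (hα1 : α ≤ 1) (hz : 0 ≤ z) :
    ML α 1 (-z) * (1 + z / Gamma (α + 1)) ≤ 1 := by
  have hone : ML α 1 (-z) = MLkernel α 1 (-z) 1 := by simp [MLkernel_one]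
  have hlower : ML α 1 (-z) / α ≤ ∫ s in 0..1, (1 - s) ^ (α - 1) * MLkernel α 1 (-z) s :=
    calc ML α 1 (-z) / α = ∫ s in 0..1, (1 - s) ^ (α - 1) * ML α 1 (-z) := by
          rw [intervalIntegral.integral_mul_const, integral_sub_rpow hα, sub_zero, one_rpow,
            one_div_mul_eq_div]
      _ ≤ ∫ s in 0..1, (1 - s) ^ (α - 1) * MLkernel α 1 (-z) s := by
          refine integral_mono_on_of_le_Ioo zero_le_one
            ((intervalIntegrable_sub_rpow hα 0 1).mul_const _)
            (intervalIntegrable_sub_rpow_mul_MLkernel hα one_pos hα one_pos _) fun s hs ↦ ?_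
          rw [hone]
          exact mul_le_mul_of_nonneg_left (antitoneOn_MLkernel_one_neg hα hα1 hz hs.1
            (Set.mem_Ioi.2 one_pos) hs.2.le) (rpow_nonneg (sub_nonneg.2 hs.2.le) _)
  calc ML α 1 (-z) * (1 + z / Gamma (α + 1))
      = ML α 1 (-z) + z * ((Gamma α)⁻¹ * (ML α 1 (-z) / α)) := by
        rw [Gamma_add_one hα.ne']
        field_simp
    _ ≤ ML α 1 (-z) + z * fracIntegral α (MLkernel α 1 (-z)) 1 := by
        rw [fracIntegral]
        gcongr
    _ = 1 := by
        rw [hone, MLkernel_eq_add_fracIntegral hα one_pos one_pos]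
        simp

end Positivity

section FourierSymbol

variable {α ϱ t x a b ξ R : ℝ}

/-- The Fourier transform in space, at time `t` and frequency `ξ ≥ 0`, of the fundamental solution
of `∂_t^α u + (-Δ)^ϱ u = u`. -/
noncomputable def fourierSymbol (α ϱ t ξ : ℝ) : ℝ :=
  ML α 1 (t ^ α * (1 - ξ ^ (2 * ϱ)))

lemma continuous_fourierSymbol (hα : 0 < α) (hϱ : 0 ≤ ϱ) (t : ℝ) :
    Continuous (fourierSymbol α ϱ t) :=
  (continuous_ML hα one_pos).comp
    (continuous_const.mul (continuous_const.sub (continuous_rpow_const (by positivity))))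

lemma intervalIntegrable_fourierSymbol_mul_cos (hα : 0 < α) (hϱ : 0 ≤ ϱ) (t x a b : ℝ) :
    IntervalIntegrable (fun ξ ↦ fourierSymbol α ϱ t ξ * cos (x * ξ)) volume a b :=
  ((continuous_fourierSymbol hα hϱ t).mul (by fun_prop)).intervalIntegrable a b

lemma fourierSymbol_le_exp (hα : 0 < α) (hα1 : α ≤ 1) (hϱ : 0 ≤ ϱ) (ht : 0 ≤ t) (hξ : 0 ≤ ξ)
    (hξ1 : ξ ≤ 1) : fourierSymbol α ϱ t ξ ≤ ⌈1 / α⌉₊ * (3 * exp (t * (1 - ξ ^ (2 * ϱ)))) := by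
  have hw : 0 ≤ 1 - ξ ^ (2 * ϱ) := sub_nonneg.2 (rpow_le_one hξ hξ1 (by positivity))
  have hw1 : 1 - ξ ^ (2 * ϱ) ≤ 1 := sub_le_self _ (by positivity)
  refine (monotoneOn_ML hα one_pos (Set.mem_Ici.2 (by positivity)) (Set.mem_Ici.2 (by positivity))
    ?_).trans (ML_one_rpow_le_exp hα (mul_nonneg ht hw))
  rw [mul_rpow ht hw]
  gcongr
  exact self_le_rpow_of_le_one hw hw1 hα1

lemma exp_div_four_le_fourierSymbol (hα : 0 < α) (hα1 : α ≤ 1) (ht : 1 + 1 / α ≤ t)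
    (hξ : ξ ^ (2 * ϱ) ≤ 1 / t) : exp (t - 1 / α) / 4 ≤ fourierSymbol α ϱ t ξ := by
  have hα' : 0 < 1 / α := by positivity
  have ht0 : 0 < t := by linarith
  have hbase : 0 ≤ 1 + -(1 / (α * t)) := by
    rw [← sub_eq_add_neg, sub_nonneg, ← div_div, div_le_one ht0]
    linarith
  have hBernoulli : (1 + -(1 / (α * t))) ^ α ≤ 1 - 1 / t :=
    (rpow_one_add_le_one_add_mul_self (by linarith) hα.le hα1).trans_eq (by field_simp; ring)
  refine (exp_div_four_le_ML_one_rpow hα hα1 (by linarith)).trans (monotoneOn_ML hα one_pos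
    (Set.mem_Ici.2 (rpow_nonneg (by linarith) _)) (Set.mem_Ici.2 ?_) ?_)
  · have : 1 / t ≤ 1 := (div_le_one ht0).2 (by linarith)
    exact mul_nonneg (by positivity) (by linarith)
  · calc (t - 1 / α) ^ α = t ^ α * (1 + -(1 / (α * t))) ^ α := by
          rw [← mul_rpow ht0.le hbase]
          congr 1
          field_simp
          ring
      _ ≤ t ^ α * (1 - ξ ^ (2 * ϱ)) := by
          gcongr
          linarith

lemma fourierSymbol_le_rpow (hα : 0 < α) (hα1 : α ≤ 1) (hϱ : 0 ≤ ϱ) (ht : 1 ≤ t) (hξ : 1 ≤ ξ) :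
    fourierSymbol α ϱ t ξ ≤ (1 + Gamma (α + 1)) * ξ ^ (-(2 * ϱ)) := by
  have hG : 0 < Gamma (α + 1) := Gamma_pos_of_pos (by linarith)
  have hw : 1 ≤ ξ ^ (2 * ϱ) := one_le_rpow hξ (by positivity)
  set z := t ^ α * (ξ ^ (2 * ϱ) - 1) with hz
  have hwz : ξ ^ (2 * ϱ) - 1 ≤ z := le_mul_of_one_le_left (by linarith) (one_le_rpow ht hα.le)
  have hdecay := ML_neg_mul_le_one hα hα1 ((sub_nonneg.2 hw).trans hwz)
  have hE : 0 ≤ ML α 1 (-z) := ML_one_nonneg hα hα1 _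
  have hEz : ML α 1 (-z) * (ξ ^ (2 * ϱ) - 1) ≤ Gamma (α + 1) * (1 - ML α 1 (-z)) :=
    calc ML α 1 (-z) * (ξ ^ (2 * ϱ) - 1) ≤ ML α 1 (-z) * z := by gcongr
      _ = Gamma (α + 1) * (ML α 1 (-z) * (z / Gamma (α + 1))) := by field_simp
      _ ≤ Gamma (α + 1) * (1 - ML α 1 (-z)) := by
        gcongr
        linarith
  have hE1 : ML α 1 (-z) ≤ 1 :=
    (le_mul_of_one_le_right hE (le_add_of_nonneg_right
      (div_nonneg ((sub_nonneg.2 hw).trans hwz) hG.le))).trans hdecay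
  rw [fourierSymbol, show t ^ α * (1 - ξ ^ (2 * ϱ)) = -z by rw [hz]; ring,
    rpow_neg (by linarith), ← div_eq_mul_inv, le_div_iff₀ (by linarith)]
  nlinarith [mul_nonneg hG.le hE]

lemma le_integral_fourierSymbol_mul_cos (hα : 0 < α) (hα1 : α ≤ 1) (hϱ : 0 < ϱ)
    (ht : 1 + 1 / α ≤ t) (hx : 0 ≤ x) (hxt : x * t ^ (-(1 / (2 * ϱ))) ≤ 1) :
    t ^ (-(1 / (2 * ϱ))) * (exp (t - 1 / α) / 8) ≤
      ∫ ξ in 0..t ^ (-(1 / (2 * ϱ))), fourierSymbol α ϱ t ξ * cos (x * ξ) := by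
  have ht0 : 0 < t := by linarith [one_div_pos.2 hα]
  set a := t ^ (-(1 / (2 * ϱ))) with ha
  have ha0 : 0 ≤ a := by positivity
  have hapow : a ^ (2 * ϱ) = 1 / t := by
    rw [ha, ← rpow_mul ht0.le, neg_mul, one_div_mul_cancel (by positivity), rpow_neg_one, one_div]
  calc a * (exp (t - 1 / α) / 8) = ∫ _ in 0..a, exp (t - 1 / α) / 8 := by
        rw [intervalIntegral.integral_const, sub_zero, smul_eq_mul]
    _ ≤ ∫ ξ in 0..a, fourierSymbol α ϱ t ξ * cos (x * ξ) := by
      refine integral_mono_on ha0 intervalIntegrable_const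
        (intervalIntegrable_fourierSymbol_mul_cos hα hϱ.le t x 0 a) fun ξ hξ ↦ ?_
      have hsymbol : exp (t - 1 / α) / 4 ≤ fourierSymbol α ϱ t ξ :=
        exp_div_four_le_fourierSymbol hα hα1 ht
          (hapow ▸ rpow_le_rpow hξ.1 hξ.2 (by positivity))
      have hxξ : x * ξ ≤ 1 := (mul_le_mul_of_nonneg_left hξ.2 hx).trans hxt
      have hcos : 1 / 2 ≤ cos (x * ξ) := by
        nlinarith [one_sub_sq_div_two_le_cos (x := x * ξ), mul_nonneg hx hξ.1]
      calc exp (t - 1 / α) / 8 = exp (t - 1 / α) / 4 * (1 / 2) := by ring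
        _ ≤ fourierSymbol α ϱ t ξ * cos (x * ξ) :=
          mul_le_mul hsymbol hcos (by norm_num) (ML_one_nonneg hα hα1 _)

lemma integral_fourierSymbol_mul_cos_nonneg (hα : 0 < α) (hα1 : α ≤ 1) (ha : 0 ≤ a)
    (hab : a ≤ b) (hx : 0 ≤ x) (hxb : x * b ≤ 1) :
    0 ≤ ∫ ξ in a..b, fourierSymbol α ϱ t ξ * cos (x * ξ) := by
  refine integral_nonneg hab fun ξ hξ ↦ mul_nonneg (ML_one_nonneg hα hα1 _) ?_
  have hxξ : x * ξ ≤ 1 := (mul_le_mul_of_nonneg_left hξ.2 hx).trans hxb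
  exact cos_nonneg_of_neg_pi_div_two_le_of_le
    (by linarith [pi_pos, mul_nonneg hx (ha.trans hξ.1)]) (by linarith [pi_gt_three])

lemma abs_fourierSymbol_mul_cos_le (hα : 0 < α) (hα1 : α ≤ 1) :
    |fourierSymbol α ϱ t ξ * cos (x * ξ)| ≤ fourierSymbol α ϱ t ξ := by
  have hsymbol : 0 ≤ fourierSymbol α ϱ t ξ := ML_one_nonneg hα hα1 _
  rw [abs_mul, abs_of_nonneg hsymbol]
  exact mul_le_of_le_one_right hsymbol (abs_cos_le_one _)

lemma abs_integral_fourierSymbol_mul_cos_le_exp (hα : 0 < α) (hα1 : α ≤ 1) (hϱ : 0 ≤ ϱ)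
    (ht : 0 ≤ t) (hb : 0 ≤ b) (hb1 : b ≤ 1) (x : ℝ) :
    |∫ ξ in b..1, fourierSymbol α ϱ t ξ * cos (x * ξ)| ≤
      ⌈1 / α⌉₊ * (3 * exp (t * (1 - b ^ (2 * ϱ)))) := by
  rw [← norm_eq_abs]
  refine (intervalIntegral.norm_integral_le_of_norm_le_const
    (C := ⌈1 / α⌉₊ * (3 * exp (t * (1 - b ^ (2 * ϱ))))) fun ξ hξ ↦ ?_).trans
    (mul_le_of_le_one_right (by positivity) ?_)
  · rw [Set.uIoc_of_le hb1] at hξ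
    have hξ0 : 0 ≤ ξ := hb.trans hξ.1.le
    refine (abs_fourierSymbol_mul_cos_le hα hα1).trans
      ((fourierSymbol_le_exp hα hα1 hϱ ht hξ0 hξ.2).trans ?_)
    gcongr
    exact hξ.1.le
  · rw [abs_of_nonneg] <;> linarith

lemma abs_integral_fourierSymbol_mul_cos_le (hα : 0 < α) (hα1 : α ≤ 1) (hϱ : 1 / 2 < ϱ)
    (ht : 1 ≤ t) (hR : 1 ≤ R) (x : ℝ) :
    |∫ ξ in 1..R, fourierSymbol α ϱ t ξ * cos (x * ξ)| ≤
      (1 + Gamma (α + 1)) / (2 * ϱ - 1) := by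
  have h0 : (0 : ℝ) ∉ Set.uIcc 1 R := by
    rw [Set.uIcc_of_le hR]
    exact fun h ↦ zero_lt_one.not_ge h.1
  calc |∫ ξ in 1..R, fourierSymbol α ϱ t ξ * cos (x * ξ)|
      ≤ ∫ ξ in 1..R, (1 + Gamma (α + 1)) * ξ ^ (-(2 * ϱ)) := by
        rw [← norm_eq_abs]
        refine intervalIntegral.norm_integral_le_of_norm_le hR (ae_of_all _ fun ξ hξ ↦ ?_)
          ((intervalIntegrable_rpow (Or.inr h0)).const_mul _)
        exact (abs_fourierSymbol_mul_cos_le hα hα1).trans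
          (fourierSymbol_le_rpow hα hα1 (by linarith) ht hξ.1.le)
    _ = (1 + Gamma (α + 1)) * ((1 - R ^ (1 - 2 * ϱ)) / (2 * ϱ - 1)) := by
        rw [intervalIntegral.integral_const_mul, integral_rpow (Or.inr ⟨by linarith, h0⟩),
          one_rpow, ← neg_div_neg_eq]
        ring_nf
    _ ≤ (1 + Gamma (α + 1)) * (1 / (2 * ϱ - 1)) := by
        have : 0 ≤ R ^ (1 - 2 * ϱ) := by positivity
        gcongr <;> linarith
    _ = (1 + Gamma (α + 1)) / (2 * ϱ - 1) := mul_one_div _ _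

lemma le_integral_zero_fourierSymbol_mul_cos (hα : 0 < α) (hα1 : α ≤ 1) (hϱ : 1 / 2 < ϱ)
    (ht : 1 + 1 / α ≤ t) (hb : t ^ (-(1 / (2 * ϱ))) ≤ b) (hb1 : b ≤ 1) (hx : 0 ≤ x)
    (hxb : x * b ≤ 1) (hR : 1 ≤ R) :
    t ^ (-(1 / (2 * ϱ))) * (exp (t - 1 / α) / 8) -
        ⌈1 / α⌉₊ * (3 * exp (t * (1 - b ^ (2 * ϱ)))) - (1 + Gamma (α + 1)) / (2 * ϱ - 1) ≤
      ∫ ξ in 0..R, fourierSymbol α ϱ t ξ * cos (x * ξ) := by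
  have hϱ0 : 0 < ϱ := by linarith
  have ht1 : 1 ≤ t := by linarith [one_div_pos.2 hα]
  have ha : 0 ≤ t ^ (-(1 / (2 * ϱ))) := by positivity
  have hlow := le_integral_fourierSymbol_mul_cos hα hα1 hϱ0 ht hx
    ((mul_le_mul_of_nonneg_left hb hx).trans hxb)
  have hmid := integral_fourierSymbol_mul_cos_nonneg (t := t) (ϱ := ϱ) hα hα1 ha hb hx hxb
  have hhigh := neg_le_of_abs_le (abs_integral_fourierSymbol_mul_cos_le_exp hα hα1 hϱ0.le
    (t := t) (by linarith) (ha.trans hb) hb1 x)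
  have htail := neg_le_of_abs_le (abs_integral_fourierSymbol_mul_cos_le hα hα1 hϱ ht1 hR x)
  have hint := intervalIntegrable_fourierSymbol_mul_cos hα hϱ0.le t x
  rw [← integral_add_adjacent_intervals (hint 0 1) (hint 1 R),
    ← integral_add_adjacent_intervals (hint 0 b) (hint b 1),
    ← integral_add_adjacent_intervals (hint 0 _) (hint (t ^ (-(1 / (2 * ϱ)))) b)]
  linarith

end FourierSymbol

section Asymptotics

open Asymptotics

variable {α ϱ β γ δ m c r s : ℝ}

lemma isLittleO_exp_sub_rpow (hδ : 0 < δ) (q : ℝ) :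
    (fun t ↦ exp (t - t ^ δ)) =o[atTop] fun t ↦ t ^ q * exp t := by
  have hdecay : (fun t : ℝ ↦ exp (-t ^ δ)) =o[atTop] fun t ↦ t ^ q := by
    refine ((isLittleO_exp_neg_mul_rpow_atTop one_pos (q / δ)).comp_tendsto
      (tendsto_rpow_atTop hδ)).congr' (.of_forall fun t ↦ by simp) ?_
    filter_upwards [eventually_ge_atTop 0] with t ht
    rw [Function.comp_apply, ← rpow_mul ht, mul_div_cancel₀ q hδ.ne']
  simpa only [← exp_add, neg_add_eq_sub] using hdecay.mul_isBigO (isBigO_refl exp atTop)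

lemma eventually_mul_exp_sub_rpow_add_le (hδ : 0 < δ) (hc : 0 < c) (q A B : ℝ) :
    ∀ᶠ t in atTop, A * exp (t - t ^ δ) + B ≤ c * (t ^ q * exp t) := by
  have hone : (fun _ : ℝ ↦ (1 : ℝ)) =o[atTop] fun t ↦ t ^ q * exp t := by
    simpa using isLittleO_exp_sub_rpow one_pos q
  filter_upwards [(((isLittleO_exp_sub_rpow hδ q).const_mul_left A).add
    (hone.const_mul_left B)).bound hc, eventually_ge_atTop 0] with t hbound ht
  rw [mul_one, norm_of_nonneg (by positivity : 0 ≤ t ^ q * exp t)] at hbound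
  exact (le_norm_self _).trans hbound

lemma eventually_mul_rpow_le_mul_rpow (hsr : s < r) (hc : 0 < c) (C : ℝ) :
    ∀ᶠ t in atTop, C * t ^ s ≤ c * t ^ r := by
  filter_upwards [(tendsto_rpow_atTop (sub_pos.2 hsr)).eventually_ge_atTop (C / c),
    eventually_gt_atTop 0] with t hC ht
  calc C * t ^ s = c * (C / c) * t ^ s := by rw [mul_div_cancel₀ C hc.ne']
    _ ≤ c * t ^ (r - s) * t ^ s := by gcongr
    _ = c * t ^ r := by rw [mul_assoc, ← rpow_add ht, sub_add_cancel]

lemma eventually_le_integral_fourierSymbol_mul_cos (hα : 0 < α) (hα1 : α ≤ 1) (hϱ : 1 / 2 < ϱ)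
    (hγ : 0 < γ) (hγϱ : γ < 1 / (2 * ϱ)) :
    ∀ᶠ t : ℝ in atTop, ∀ x ∈ Set.Icc 0 (t ^ γ), ∀ R ≥ 1,
      exp (-(1 / α)) / 16 * (t ^ (-(1 / (2 * ϱ))) * exp t) ≤
        ∫ ξ in 0..R, fourierSymbol α ϱ t ξ * cos (x * ξ) := by
  have hδ : 0 < 1 - 2 * ϱ * γ := by
    rw [lt_div_iff₀ (by linarith)] at hγϱ
    linarith
  filter_upwards [eventually_ge_atTop (1 + 1 / α), eventually_mul_exp_sub_rpow_add_le hδ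
    (by positivity : 0 < exp (-(1 / α)) / 16) (-(1 / (2 * ϱ))) (⌈1 / α⌉₊ * 3)
    ((1 + Gamma (α + 1)) / (2 * ϱ - 1))] with t ht herror x hx R hR
  have ht1 : 1 ≤ t := by linarith [one_div_pos.2 hα]
  have ht0 : 0 < t := by linarith
  have hxb : x * t ^ (-γ) ≤ 1 := by
    rw [rpow_neg ht0.le, ← div_eq_mul_inv]
    exact (div_le_one (by positivity)).2 hx.2
  have hphase : t * (1 - (t ^ (-γ)) ^ (2 * ϱ)) = t - t ^ (1 - 2 * ϱ * γ) := by
    rw [mul_one_sub, ← rpow_mul ht0.le, sub_eq_add_neg 1, rpow_one_add' ht0.le (by linarith)]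
    ring_nf
  have hlower := le_integral_zero_fourierSymbol_mul_cos hα hα1 hϱ ht
    (rpow_le_rpow_of_exponent_le ht1 (neg_le_neg hγϱ.le))
    (rpow_le_one_of_one_le_of_nonpos ht1 (by linarith)) hx.1 hxb hR
  rw [hphase, sub_eq_add_neg t (1 / α), exp_add] at hlower
  linarith

theorem stmt19_general (hα : 0 < α) (hα1 : α ≤ 1) (hϱ : 1 / 2 < ϱ) (hβ : β < 1 / (2 * ϱ))
    (hm : 0 < m) (u : ℝ → ℝ → ℝ)
    (hu : ∀ t : ℝ, 0 < t → ∀ x : ℝ, 0 < x → Tendsto (fun R : ℝ ↦ 1 / π * ∫ ξ in (0 : ℝ)..R,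
      ML α 1 (t ^ α * (1 - ξ ^ (2 * ϱ))) * cos (x * ξ)) atTop (𝓝 (u t x))) :
    (∃ c > 0, ∀ᶠ t in atTop, c * t ^ (-(1 / (2 * ϱ))) * ML α 1 (t ^ α) ≤ u t (m * t ^ β)) ∧
      Tendsto (fun t ↦ u t (m * t ^ β)) atTop atTop := by
  obtain ⟨γ, hγ, hγϱ⟩ := exists_between (max_lt hβ (by positivity : 0 < 1 / (2 * ϱ)))
  obtain ⟨hβγ, hγ0⟩ := max_lt_iff.1 hγ
  set c := 1 / π * (exp (-(1 / α)) / 16) with hc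
  have hc0 : 0 < c := by positivity
  have hexp : ∀ᶠ t in atTop, c * (t ^ (-(1 / (2 * ϱ))) * exp t) ≤ u t (m * t ^ β) := by
    filter_upwards [eventually_le_integral_fourierSymbol_mul_cos hα hα1 hϱ hγ0 hγϱ,
      eventually_mul_rpow_le_mul_rpow hβγ one_pos m, eventually_gt_atTop 0] with t hlower hx ht
    refine ge_of_tendsto (hu t ht _ (by positivity)) ?_
    filter_upwards [eventually_ge_atTop 1] with R hR
    rw [hc, mul_assoc]
    gcongr
    exact hlower _ ⟨by positivity, hx.trans_eq (one_mul _)⟩ R hR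
  refine ⟨⟨c / (⌈1 / α⌉₊ * 3), by positivity, ?_⟩, tendsto_atTop_mono' _ hexp ?_⟩
  · filter_upwards [hexp, eventually_ge_atTop 0] with t hexp ht
    calc c / (⌈1 / α⌉₊ * 3) * t ^ (-(1 / (2 * ϱ))) * ML α 1 (t ^ α)
        ≤ c / (⌈1 / α⌉₊ * 3) * t ^ (-(1 / (2 * ϱ))) * (⌈1 / α⌉₊ * (3 * exp t)) := by
          gcongr
          exact ML_one_rpow_le_exp hα ht
      _ = c * (t ^ (-(1 / (2 * ϱ))) * exp t) := by field_simp
      _ ≤ u t (m * t ^ β) := hexp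
  · refine ((tendsto_exp_div_rpow_atTop (1 / (2 * ϱ))).const_mul_atTop hc0).congr' ?_
    filter_upwards [eventually_ge_atTop 0] with t ht
    rw [rpow_neg ht, div_eq_inv_mul]

end Asymptotics

theorem stmt19 (n : ℕ) (hn : 2 ≤ n) (ϱ α β m ℓ : ℝ) (hϱ : 1 ≤ ϱ)
    (hα1 : 1 / (n : ℝ) ≤ α) (hα2 : α < 1)
    (hβ : β ∈ Set.Ioo (0 : ℝ) (1 / (2 * ϱ))) (hm : 0 < m)
    (hℓ : ℓ ∈ Set.Ioo (0 : ℝ) (Real.pi / 2)) (hℓeq : Real.cos ℓ = ℓ)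
    (u : ℝ → ℝ → ℝ)
    (hu : ∀ t : ℝ, 0 < t → ∀ x : ℝ, 0 < x →
      Tendsto (fun R : ℝ =>
          (1 / Real.pi) * ∫ ξ in (0 : ℝ)..R,
            ML α 1 (t ^ α * (1 - ξ ^ (2 * ϱ))) * Real.cos (x * ξ))
        atTop (nhds (u t x))) :
    (∃ ε : ℝ → ℝ, Tendsto ε atTop (nhds 0) ∧
      ∀ᶠ t : ℝ in atTop,
        u t (m * t ^ β) ≥
          (α * ℓ ^ (2 - 2 * ϱ) / (2 * ϱ)) * m ^ (2 * ϱ - 1) *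
            t ^ (β * (2 * ϱ - 1) - α * n) * ML α 1 (t ^ α) * (1 - ε t)) ∧
    Tendsto (fun t : ℝ => u t (m * t ^ β)) atTop atTop := by
  have hn0 : (0 : ℝ) < n := by exact_mod_cast (by lia : 0 < n)
  have hα : 0 < α := (one_div_pos.2 hn0).trans_le hα1
  have hrate : β * (2 * ϱ - 1) - α * n < -(1 / (2 * ϱ)) :=
    calc β * (2 * ϱ - 1) - α * n < 1 / (2 * ϱ) * (2 * ϱ - 1) - 1 := by
          have hαn : 1 ≤ α * n := (div_le_iff₀ hn0).1 hα1
          linarith [mul_lt_mul_of_pos_right hβ.2 (by linarith : 0 < 2 * ϱ - 1)]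
      _ = -(1 / (2 * ϱ)) := by field_simp; ring
  obtain ⟨⟨c, hc, hlower⟩, htop⟩ := stmt19_general hα hα2.le (by linarith) hβ.2 hm u hu
  -- The rate `t ^ (-1/(2ϱ))` beats the required one, so `ε = 0` works whatever the constant `C₁`.
  refine ⟨⟨0, tendsto_const_nhds, ?_⟩, htop⟩
  filter_upwards [hlower, eventually_mul_rpow_le_mul_rpow hrate hc
    (α * ℓ ^ (2 - 2 * ϱ) / (2 * ϱ) * m ^ (2 * ϱ - 1))] with t hlower hpow
  rw [Pi.zero_apply, sub_zero, mul_one]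
  exact (mul_le_mul_of_nonneg_right hpow (ML_one_nonneg hα hα2.le _)).trans hlower
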